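/- arXiv:math/0502046 — 2 statements merged into one kernel-verified Lean document; each statement's English description precedes it below -/
import Mathlib

section
/- Let A be a commutative ring, n, m ≥ 1, let a, b, t_1, …, t_n, u_1, …, u_m ∈ A, and set f(Z) = a · ∏_{i=1}^n (Z − t_i) and g(Z) = b · ∏_{j=1}^m (Z − u_j). Then Res_{n,m}(f, g) = a^m · b^n · ∏_{i=1}^n ∏_{j=1}^m (t_i − u_j). -/
open Polynomial

/-- The Sylvester matrix of `f` and `g`, viewed with formal degrees `n` and `m`:
an `(m + n) × (m + n)` matrix whose first `m` rows hold shifted coefficients of `f`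
(from the coefficient of `Z^n` down to the constant term) and whose last `n` rows
hold shifted coefficients of `g`. -/
noncomputable def sylvester {R : Type*} [CommRing R] (n m : ℕ) (f g : R[X]) :
    Matrix (Fin (m + n)) (Fin (m + n)) R :=
  Matrix.of fun i j =>
    Fin.addCases
      (fun i₀ : Fin m =>
        if (i₀ : ℕ) ≤ (j : ℕ) ∧ (j : ℕ) ≤ (i₀ : ℕ) + n then
          f.coeff (n - ((j : ℕ) - (i₀ : ℕ))) else 0)
      (fun i₁ : Fin n =>
        if (i₁ : ℕ) ≤ (j : ℕ) ∧ (j : ℕ) ≤ (i₁ : ℕ) + m then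
          g.coeff (m - ((j : ℕ) - (i₁ : ℕ))) else 0)
      i

/-- The resultant `Res_{n,m}(f, g)`: the determinant of the Sylvester matrix of `f` and `g`
viewed with formal degrees `n` and `m`. -/
noncomputable def res {R : Type*} [CommRing R] (n m : ℕ) (f g : R[X]) : R :=
  (sylvester n m f g).det

/-! Reversing the order of the rows and of the columns turns the Sylvester matrix into the transpose
of Mathlib's. The two reversals are the same permutation, so their signs cancel and the two
resultants agree. Resultants are multiplicative in the first argument, and
`Res(X - t, g) = g(t)`. -/

open Finset in
theorem resultant_prod_X_sub_C_left {R ι : Type*} [CommRing R] (s : Finset ι) (t : ι → R)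
    {g : R[X]} {m : ℕ} (hg : g.natDegree ≤ m) :
    (∏ i ∈ s, (X - C (t i))).resultant g #s m = ∏ i ∈ s, g.eval (t i) := by
  nontriviality R
  have hlead : ∏ i ∈ s, (X - C (t i)).leadingCoeff ≠ 0 := by simp
  have hprod := resultant_prod_left s (fun i => X - C (t i)) g m hlead hg
  rw [natDegree_finsetProd_X_sub_C_eq_card] at hprod
  simpa only [natDegree_X_sub_C, resultant_X_sub_C_left _ _ _ hg] using hprod

open Finset in
theorem resultant_prod_X_sub_C_prod_X_sub_C {R ι κ : Type*} [CommRing R]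
    (s : Finset ι) (s' : Finset κ) (t : ι → R) (u : κ → R) :
    (∏ i ∈ s, (X - C (t i))).resultant (∏ j ∈ s', (X - C (u j))) #s #s' =
      ∏ i ∈ s, ∏ j ∈ s', (t i - u j) := by
  nontriviality R
  rw [resultant_prod_X_sub_C_left s t (natDegree_finsetProd_X_sub_C_eq_card s' u).le]
  simp only [eval_prod, eval_sub, eval_X, eval_C]

/-- The order-reversing bijection `k ↦ n + m - 1 - k` that matches the indices of Mathlib's
`Polynomial.sylvester f g n m`, where the coefficients of `g` come first and run upwards, with
those of `sylvester n m f g`, where the coefficients of `f` come first and run downwards. -/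
def sylvesterRev (n m : ℕ) : Fin (n + m) ≃ Fin (m + n) :=
  Fin.revPerm.trans (finCongr (add_comm n m))

theorem val_sylvesterRev {n m : ℕ} (k : Fin (n + m)) :
    (sylvesterRev n m k : ℕ) = n + m - (k + 1) := by
  simp [sylvesterRev, Fin.val_rev]

theorem sylvesterRev_castAdd {n m : ℕ} (k : Fin n) :
    sylvesterRev n m (k.castAdd m) = Fin.natAdd m k.rev := by
  simp [sylvesterRev, Fin.rev_castAdd]

theorem sylvesterRev_natAdd {n m : ℕ} (k : Fin m) :
    sylvesterRev n m (k.natAdd n) = Fin.castAdd n k.rev := by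
  ext
  rw [val_sylvesterRev, Fin.val_natAdd, Fin.val_castAdd, Fin.val_rev]
  omega

theorem sylvester_submatrix_sylvesterRev {R : Type*} [CommRing R] (n m : ℕ) (f g : R[X]) :
    (_root_.sylvester n m f g).submatrix (sylvesterRev n m) (sylvesterRev n m) =
      (Polynomial.sylvester f g n m).transpose := by
  ext k j
  simp only [Matrix.submatrix_apply, Matrix.transpose_apply, _root_.sylvester,
    Polynomial.sylvester, Matrix.of_apply, val_sylvesterRev]
  induction k using Fin.addCases with
  | left k =>
    simp only [sylvesterRev_castAdd, Fin.addCases_right, Fin.addCases_left, Set.mem_Icc,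
      Fin.val_rev]
    exact ite_congr (propext (by omega)) (fun hband => congrArg g.coeff (by omega)) fun _ => rfl
  | right k =>
    simp only [sylvesterRev_natAdd, Fin.addCases_left, Fin.addCases_right, Set.mem_Icc,
      Fin.val_rev]
    exact ite_congr (propext (by omega)) (fun hband => congrArg f.coeff (by omega)) fun _ => rfl

theorem res_eq_resultant {R : Type*} [CommRing R] (n m : ℕ) (f g : R[X]) :
    res n m f g = f.resultant g n m := by
  rw [res, ← Matrix.det_submatrix_equiv_self (sylvesterRev n m), sylvester_submatrix_sylvesterRev,
    Matrix.det_transpose, resultant]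

/-- For `f(Z) = a ∏_{i=1}^n (Z − t_i)` and `g(Z) = b ∏_{j=1}^m (Z − u_j)`
over a commutative ring `A`, we have
`Res_{n,m}(f, g) = a^m b^n ∏_{i=1}^n ∏_{j=1}^m (t_i − u_j)`. -/
theorem res_prod_roots {A : Type*} [CommRing A] (n m : ℕ) (hn : 1 ≤ n) (hm : 1 ≤ m)
    (a b : A) (t : Fin n → A) (u : Fin m → A) :
    res n m (C a * ∏ i : Fin n, (X - C (t i))) (C b * ∏ j : Fin m, (X - C (u j))) =
      a ^ m * b ^ n * ∏ i : Fin n, ∏ j : Fin m, (t i - u j) := by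
  have hroots := resultant_prod_X_sub_C_prod_X_sub_C Finset.univ Finset.univ t u
  rw [Finset.card_fin, Finset.card_fin] at hroots
  rw [res_eq_resultant, resultant_C_mul_left, resultant_C_mul_right, hroots, mul_assoc]
end

section
/- Let k be an algebraically closed field of characteristic zero, let n ≥ 2, and let R = k[p_0, …, p_n] be the polynomial ring in n+1 independent variables. Let f(Z) = p_0 Z^n + p_1 Z^{n−1} + ⋯ + p_n over R and let Δ_n ∈ R be the unique polynomial with Res_{n,n−1}(f, f′) = p_0 · Δ_n. Then Δ_n is an irreducible element of R. -/
open Polynomial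

/-- The generic polynomial `f(Z) = p_0 Z^n + p_1 Z^{n-1} + ⋯ + p_n` over `k[p_0, …, p_n]`. -/
noncomputable def genericPoly (k : Type*) [Field k] (n : ℕ) :
    Polynomial (MvPolynomial (Fin (n + 1)) k) :=
  ∑ i : Fin (n + 1), Polynomial.C (MvPolynomial.X i) * Polynomial.X ^ (n - (i : ℕ))

/-!
Expressing the coefficients through the leading coefficient `a` and the roots `x_1, …, x_n`
embeds `k[p_0, …, p_n]` into `k[a][x_1, …, x_n]`, with image consisting of polynomials symmetric
in the roots, and sends the discriminant to `± a^(2n-2) ∏_{i ≠ j} (xᵢ - xⱼ)`. If `xᵢ - xⱼ` divides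
a symmetric polynomial, the quotient is antisymmetric under the exchange of `xᵢ` and `xⱼ`, so it
vanishes at `xᵢ = xⱼ` when `2 ≠ 0`, and `(xᵢ - xⱼ)²` divides as well. The cube of `xᵢ - xⱼ` does
not divide the discriminant, hence in any factorization of the discriminant one factor is prime to
all the differences of roots. That factor divides a power of `a`, so it is a constant times a
power of `p_0`.

It remains to see that `p_0` does not divide the discriminant. Let one root escape to infinity:
specialize `f` to `(T Z - 1) g` with `g` generic of degree `n - 1`. The leading coefficient becomes
divisible by `T`, while `Res(f, f′)` becomes
`T Res(T Z - 1, g) Res(g, T Z - 1) Res(g, g′)`, which is divisible by `T` only once.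
-/

namespace GenericPolynomial

section Resultant

variable {R : Type*} [CommRing R]

lemma sylvester_eq_reindex (n m : ℕ) (f g : R[X]) :
    _root_.sylvester n m f g = (Polynomial.sylvester g f m n).transpose.reindex
      (finSumFinEquiv.symm.trans ((Equiv.sumCongr Fin.revPerm Fin.revPerm).trans finSumFinEquiv))
      Fin.revPerm := by
  ext i j
  induction i using Fin.addCases with | left i | right i
  all_goals
    simp only [_root_.sylvester, Polynomial.sylvester, Matrix.of_apply, Fin.addCases_left,
      Fin.addCases_right, Set.mem_Icc, Matrix.reindex_apply, Matrix.submatrix_apply,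
      Matrix.transpose_apply, Equiv.symm_trans, Equiv.sumCongr_symm, Equiv.symm_symm,
      Equiv.coe_trans, Function.comp_apply, finSumFinEquiv_symm_apply_castAdd,
      finSumFinEquiv_symm_apply_natAdd, finSumFinEquiv_apply_left, finSumFinEquiv_apply_right,
      Equiv.sumCongr_apply, Sum.map_inl, Sum.map_inr, Fin.revPerm_symm, Fin.revPerm_apply,
      Fin.val_rev]
    exact ite_congr (propext (by omega)) (fun _ => congrArg _ (by omega)) fun _ => rfl

lemma associated_res_resultant (n m : ℕ) (f g : R[X]) :
    Associated (res n m f g) (f.resultant g n m) := by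
  rw [res, sylvester_eq_reindex, Matrix.det_reindex, Matrix.det_transpose, ← resultant,
    resultant_comm]
  refine (associated_unit_mul_left _ _ ?_).trans
    (associated_unit_mul_left _ _ (isUnit_one.neg.pow _))
  exact (Units.isUnit _).map (Int.castRingHom R)

lemma resultant_mul_right_of_le {f g₁ g₂ : R[X]} {m n₁ n₂ : ℕ} (hf : f.natDegree ≤ m)
    (h₁ : g₁.natDegree ≤ n₁) (h₂ : g₂.natDegree ≤ n₂) :
    resultant f (g₁ * g₂) m (n₁ + n₂) = resultant f g₁ m n₁ * resultant f g₂ m n₂ := by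
  obtain ⟨k₁, rfl⟩ := Nat.exists_eq_add_of_le h₁
  obtain ⟨k₂, rfl⟩ := Nat.exists_eq_add_of_le h₂
  rw [add_add_add_comm, resultant_add_right_deg _ _ _ _ _ natDegree_mul_le,
    resultant_mul_right _ _ _ _ hf, resultant_add_right_deg _ _ _ _ _ le_rfl,
    resultant_add_right_deg _ _ _ _ _ le_rfl]
  ring

lemma resultant_mul_left_of_le {f₁ f₂ g : R[X]} {m₁ m₂ n : ℕ} (h₁ : f₁.natDegree ≤ m₁)
    (h₂ : f₂.natDegree ≤ m₂) (hg : g.natDegree ≤ n) :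
    resultant (f₁ * f₂) g (m₁ + m₂) n = resultant f₁ g m₁ n * resultant f₂ g m₂ n := by
  rw [resultant_comm, resultant_mul_right_of_le hg h₁ h₂, resultant_comm f₁, resultant_comm f₂]
  ring

lemma resultant_derivative_linear_mul (u v : R) {g : R[X]} {m : ℕ} (hg : g.natDegree ≤ m + 1) :
    resultant ((C u * X + C v) * g) (derivative ((C u * X + C v) * g)) (m + 2) (m + 1) =
      u * (resultant (C u * X + C v) g 1 (m + 1) * resultant g (C u * X + C v) (m + 1) 1 *
        resultant g (derivative g) (m + 1) m) := by
  set L : R[X] := C u * X + C v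
  have hL : L.natDegree ≤ 1 := natDegree_linear_le
  have hg' : (derivative g).natDegree ≤ m := (natDegree_derivative_le g).trans (by omega)
  have hd : derivative (L * g) = C u * g + L * derivative g := by simp [L]
  have hd' : (derivative (L * g)).natDegree ≤ m + 1 := by
    rw [hd]; compute_degree
    omega
  calc resultant (L * g) (derivative (L * g)) (m + 2) (m + 1)
      = resultant L (C u * g + L * derivative g) 1 (m + 1) *
          resultant g (L * derivative g + g * C u) (m + 1) (m + 1) := by
        rw [show m + 2 = 1 + (m + 1) by omega, resultant_mul_left_of_le hL hg hd', hd,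
          add_comm (L * _), mul_comm g]
    _ = resultant L (C u * g) 1 (m + 1) * resultant g (L * derivative g) (m + 1) (1 + m) := by
        rw [resultant_add_mul_right _ _ _ _ _ (by omega) hL,
          resultant_add_mul_right _ _ _ _ _ (by simp) hg, add_comm 1 m]
    _ = _ := by
        rw [resultant_C_mul_right, resultant_mul_right_of_le hg hL hg']
        ring

end Resultant

section SplitPoly

variable {S ι : Type*} [CommRing S] [Fintype ι]

/-- The polynomial `a ∏ᵢ (Z - bᵢ)` with leading coefficient `a` and roots `bᵢ`. -/
noncomputable def splitPoly (a : S) (b : ι → S) : S[X] :=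
  C a * ∏ i, (X - C (b i))

lemma map_splitPoly {S' : Type*} [CommRing S'] (φ : S →+* S') (a : S) (b : ι → S) :
    (splitPoly a b).map φ = splitPoly (φ a) (φ ∘ b) := by
  simp [splitPoly, Polynomial.map_prod]

lemma splitPoly_comp_perm (a : S) (b : ι → S) (e : Equiv.Perm ι) :
    splitPoly a (b ∘ e) = splitPoly a b := by
  rw [splitPoly, splitPoly, ← Equiv.prod_comp e fun i => X - C (b i)]
  rfl

lemma natDegree_splitPoly [IsDomain S] {a : S} (ha : a ≠ 0) (b : ι → S) :
    (splitPoly a b).natDegree = Fintype.card ι := by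
  rw [splitPoly, natDegree_C_mul ha, natDegree_finsetProd_X_sub_C_eq_card, Finset.card_univ]

lemma leadingCoeff_splitPoly [IsDomain S] (a : S) (b : ι → S) :
    (splitPoly a b).leadingCoeff = a := by
  rw [splitPoly, leadingCoeff_mul, leadingCoeff_C, (monic_prod_X_sub_C b _).leadingCoeff, mul_one]

lemma roots_splitPoly [IsDomain S] {a : S} (ha : a ≠ 0) (b : ι → S) :
    (splitPoly a b).roots = Finset.univ.val.map b := by
  rw [splitPoly, roots_C_mul _ ha, ← roots_multiset_prod_X_sub_C (Finset.univ.val.map b),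
    Multiset.map_map]
  rfl

lemma eval_derivative_splitPoly [DecidableEq ι] (a : S) (b : ι → S) (i : ι) :
    (derivative (splitPoly a b)).eval (b i) = a * ∏ j ∈ Finset.univ.erase i, (b i - b j) := by
  have h := Lagrange.eval_nodal_derivative_eval_node_eq (v := b) (Finset.mem_univ i)
  rw [Lagrange.nodal, Lagrange.eval_nodal] at h
  rw [splitPoly, derivative_C_mul, eval_mul, eval_C, h]

open Finset in
lemma resultant_derivative_splitPoly [IsDomain S] {a : S} (ha : a ≠ 0) (b : ι → S) :
    resultant (splitPoly a b) (derivative (splitPoly a b)) (Fintype.card ι) (Fintype.card ι - 1) =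
      a ^ (Fintype.card ι - 1 + Fintype.card ι) *
        ∏ p ∈ (univ : Finset ι).offDiag, (b p.1 - b p.2) := by
  classical
  have hdeg := natDegree_splitPoly ha b
  have hsplits : (splitPoly a b).Splits :=
    (Splits.C a).mul (Splits.prod fun _ _ => Splits.X_sub_C _)
  have hoffDiag : ∏ i, ∏ j ∈ univ.erase i, (b i - b j) =
      ∏ p ∈ (univ : Finset ι).offDiag, (b p.1 - b p.2) :=
    (prod_finset_product univ.offDiag univ (fun i => univ.erase i) (by simp [eq_comm])
      (f := fun p => b p.1 - b p.2)).symm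
  have h := resultant_eq_prod_eval _ _ _ (natDegree_derivative_le (splitPoly a b)) hsplits
  rw [hdeg, leadingCoeff_splitPoly, roots_splitPoly ha, Multiset.map_map] at h
  calc _ = a ^ (Fintype.card ι - 1) * ∏ i, (derivative (splitPoly a b)).eval (b i) := h
    _ = _ := by
      simp only [eval_derivative_splitPoly, prod_mul_distrib, prod_const, card_univ, hoffDiag]
      ring

lemma exists_eq_splitPoly {K : Type*} [Field K] {F : K[X]} (hF : F.Splits) :
    ∃ b : Fin F.natDegree → K, F = splitPoly F.leadingCoeff b := by
  have hlen : F.natDegree = F.roots.toList.length := by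
    rw [Multiset.length_toList, hF.natDegree_eq_card_roots]
  rw [hlen]
  refine ⟨F.roots.toList.get, ?_⟩
  conv_lhs => rw [hF.eq_prod_roots, ← Multiset.coe_toList F.roots]
  rw [splitPoly, Multiset.map_coe, Multiset.prod_coe, ← Fin.prod_univ_fun_getElem]
  rfl

end SplitPoly

section Specialization

variable {k : Type*} [Field k] {S S' : Type*} [CommRing S] [Algebra k S] [CommRing S']
  [Algebra k S'] {n : ℕ}

lemma natDegree_genericPoly_le (k : Type*) [Field k] (n : ℕ) :
    (genericPoly k n).natDegree ≤ n :=
  natDegree_sum_le_of_forall_le _ _ fun _ _ =>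
    (natDegree_C_mul_X_pow_le _ _).trans (Nat.sub_le _ _)

lemma coeff_genericPoly (i : Fin (n + 1)) :
    (genericPoly k n).coeff (n - i) = MvPolynomial.X i := by
  rw [genericPoly, finsetSum_coeff, Finset.sum_eq_single_of_mem i (Finset.mem_univ i)]
  · simp
  · intro j _ hji
    rw [coeff_C_mul_X_pow, if_neg]
    have := Fin.val_ne_of_ne hji
    omega

lemma coeff_genericPoly_self : (genericPoly k n).coeff n = MvPolynomial.X 0 :=
  coeff_genericPoly 0

lemma natDegree_genericPoly (k : Type*) [Field k] (n : ℕ) : (genericPoly k n).natDegree = n :=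
  natDegree_eq_of_le_of_coeff_ne_zero (natDegree_genericPoly_le k n)
    (coeff_genericPoly_self (k := k) ▸ MvPolynomial.X_ne_zero 0)

variable (k n) in
/-- The homomorphism `k[p_0, …, p_n] → S` substituting for the variables the coefficients of a
polynomial `F` of formal degree `n`, so that `p_i` goes to the coefficient of `Z^(n-i)`. -/
noncomputable def specialization (F : S[X]) : MvPolynomial (Fin (n + 1)) k →ₐ[k] S :=
  MvPolynomial.aeval fun i => F.coeff (n - i)

lemma specialization_X (F : S[X]) (i : Fin (n + 1)) :
    specialization k n F (MvPolynomial.X i) = F.coeff (n - i) :=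
  MvPolynomial.aeval_X _ i

lemma comp_specialization (φ : S →ₐ[k] S') (F : S[X]) :
    φ.comp (specialization k n F) = specialization k n (F.map φ.toRingHom) :=
  MvPolynomial.algHom_ext fun i => by simp [specialization]

lemma specialization_map_genericPoly (φ : MvPolynomial (Fin (n + 1)) k →ₐ[k] S) :
    specialization k n ((genericPoly k n).map φ.toRingHom) = φ :=
  MvPolynomial.algHom_ext fun i => by
    simp [specialization_X, coeff_genericPoly]

lemma map_specialization_genericPoly {F : S[X]} (hF : F.natDegree ≤ n) :
    (genericPoly k n).map (specialization k n F).toRingHom = F := by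
  conv_rhs => rw [F.as_sum_range_C_mul_X_pow' (Nat.lt_succ_of_le hF), ← Finset.sum_range_reflect,
    Finset.sum_range]
  simp [genericPoly, Polynomial.map_sum, specialization_X]

lemma associated_resultant_derivative_genericPoly (hn : 0 < n) :
    Associated (resultant (genericPoly k n) (derivative (genericPoly k n)) n (n - 1))
      (MvPolynomial.X 0 * (genericPoly k n).discr) := by
  have hdeg := natDegree_genericPoly k n
  have h := resultant_deriv (natDegree_pos_iff_degree_pos.1 (hdeg ▸ hn))
  rw [leadingCoeff, hdeg, coeff_genericPoly_self, mul_assoc] at h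
  rw [h]
  exact associated_unit_mul_left _ _ (isUnit_one.neg.pow _)

lemma associated_specialization_discr (hn : 0 < n) {F : S[X]} (hF : F.natDegree ≤ n) :
    Associated (F.coeff n * specialization k n F (genericPoly k n).discr)
      (resultant F (derivative F) n (n - 1)) := by
  have h := (associated_resultant_derivative_genericPoly (k := k) hn).map (specialization k n F)
  rw [map_mul, specialization_X, Fin.val_zero, Nat.sub_zero] at h
  convert h.symm
  conv_lhs => rw [← map_specialization_genericPoly (k := k) hF]
  rw [derivative_map, resultant_map_map]
  rfl

end Specialization

section Difference

variable {R σ : Type*} [CommRing R]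

open Function in
lemma X_sub_X_dvd_iff [DecidableEq σ] {i j : σ} {G : MvPolynomial σ R} :
    MvPolynomial.X i - MvPolynomial.X j ∣ G ↔ MvPolynomial.rename (update id i j) G = 0 := by
  constructor
  · rintro ⟨H, rfl⟩
    rcases eq_or_ne j i with rfl | hji
    · simp
    · simp [hji]
  · -- Substituting `X j` for `X i` is the identity modulo `X i - X j`.
    intro h
    let I := Ideal.span {(MvPolynomial.X i - MvPolynomial.X j : MvPolynomial σ R)}
    have hcomp : (Ideal.Quotient.mkₐ R I).comp (MvPolynomial.rename (update id i j)) =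
        Ideal.Quotient.mkₐ R I := by
      refine MvPolynomial.algHom_ext fun l => ?_
      rcases eq_or_ne l i with rfl | hl
      · simpa using (Ideal.Quotient.eq.2 (Ideal.mem_span_singleton_self _)).symm
      · simp [hl]
    rw [← Ideal.mem_span_singleton, ← Ideal.Quotient.eq_zero_iff_mem]
    simpa [h] using (DFunLike.congr_fun hcomp G).symm

lemma prime_X_sub_X [IsDomain R] {i j : σ} (hij : i ≠ j) :
    Prime (MvPolynomial.X i - MvPolynomial.X j : MvPolynomial σ R) := by
  classical
  refine ⟨sub_ne_zero.2 (MvPolynomial.X_injective.ne hij), fun h => ?_, fun f g => ?_⟩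
  · simpa using X_sub_X_dvd_iff.1 (h.dvd (a := 1))
  · simp only [X_sub_X_dvd_iff, map_mul, mul_eq_zero, imp_self]

lemma eq_and_eq_or_eq_and_eq_of_X_sub_X_dvd [Nontrivial R] {i j p q : σ} (hpq : p ≠ q)
    (h : (MvPolynomial.X i - MvPolynomial.X j : MvPolynomial σ R) ∣
      MvPolynomial.X p - MvPolynomial.X q) :
    p = i ∧ q = j ∨ p = j ∧ q = i := by
  classical
  rw [X_sub_X_dvd_iff, map_sub, MvPolynomial.rename_X, MvPolynomial.rename_X, sub_eq_zero] at h
  have := MvPolynomial.X_injective h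
  grind [Function.update_apply]

lemma not_X_sub_X_dvd_C {i j : σ} {r : R} (hr : r ≠ 0) :
    ¬ (MvPolynomial.X i - MvPolynomial.X j : MvPolynomial σ R) ∣ MvPolynomial.C r := by
  classical
  simpa [X_sub_X_dvd_iff] using hr

lemma X_sub_X_dvd_of_isSymmetric {G : MvPolynomial σ R} (hG : G.IsSymmetric) {i j p q : σ}
    (hij : i ≠ j) (hpq : p ≠ q) (h : MvPolynomial.X i - MvPolynomial.X j ∣ G) :
    MvPolynomial.X p - MvPolynomial.X q ∣ G := by
  obtain ⟨e, hi, hj⟩ := MulAction.is_two_pretransitive_iff.1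
    (Equiv.Perm.isMultiplyPretransitive σ 2) hij hpq
  simpa [hG e, ← hi, ← hj] using map_dvd (MvPolynomial.rename (R := R) e) h

open Function in
lemma X_sub_X_sq_dvd_of_isSymmetric [IsDomain R] [NeZero (2 : R)] {G : MvPolynomial σ R}
    (hG : G.IsSymmetric) {i j : σ} (hij : i ≠ j) (h : MvPolynomial.X i - MvPolynomial.X j ∣ G) :
    (MvPolynomial.X i - MvPolynomial.X j) ^ 2 ∣ G := by
  classical
  obtain ⟨H, rfl⟩ := h
  have hanti : MvPolynomial.rename (Equiv.swap i j) H = -H := by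
    refine mul_left_cancel₀ (prime_X_sub_X (R := R) hij).ne_zero ?_
    have := hG (Equiv.swap i j)
    simp only [map_mul, map_sub, MvPolynomial.rename_X, Equiv.swap_apply_left,
      Equiv.swap_apply_right] at this
    linear_combination -this
  have hupdate : update id i j ∘ Equiv.swap i j = update id i j := by
    ext l
    grind [Function.update_apply]
  have hneg : MvPolynomial.rename (update id i j) H = -MvPolynomial.rename (update id i j) H := by
    rw [← map_neg, ← hanti, MvPolynomial.rename_rename, hupdate]
  rw [pow_two]
  refine mul_dvd_mul_left _ (X_sub_X_dvd_iff.2 ?_)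
  have htwo : (2 : MvPolynomial σ R) ≠ 0 := by
    rw [← map_ofNat MvPolynomial.C 2]
    exact MvPolynomial.C_ne_zero.2 two_ne_zero
  refine (mul_eq_zero.1 ?_).resolve_left htwo
  linear_combination hneg

open Finset in
lemma not_X_sub_X_cube_dvd [IsDomain R] [Fintype σ] {i j : σ} (hij : i ≠ j)
    {r : R} (hr : r ≠ 0) :
    ¬ (MvPolynomial.X i - MvPolynomial.X j : MvPolynomial σ R) ^ 3 ∣ MvPolynomial.C r *
      ∏ p ∈ (univ : Finset σ).offDiag, (MvPolynomial.X p.1 - MvPolynomial.X p.2) := by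
  classical
  have hprime := prime_X_sub_X (R := R) hij
  intro h
  rw [← mul_prod_erase _ _ (show (i, j) ∈ univ.offDiag by simp [hij]),
    ← mul_prod_erase (univ.offDiag.erase (i, j)) _ (show (j, i) ∈ _ by simp [hij.symm])] at h
  set P : MvPolynomial σ R := ∏ p ∈ (univ.offDiag.erase (i, j)).erase (j, i),
    (MvPolynomial.X p.1 - MvPolynomial.X p.2)
  have hdvd : MvPolynomial.X i - MvPolynomial.X j ∣ MvPolynomial.C r * P := by
    rw [← mul_dvd_mul_iff_left (pow_ne_zero 2 hprime.ne_zero), ← dvd_neg]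
    convert h using 1 <;> ring
  rcases hprime.dvd_or_dvd hdvd with hC | hdvdP
  · exact not_X_sub_X_dvd_C hr hC
  · obtain ⟨p, hp, hpd⟩ := hprime.exists_mem_finset_dvd hdvdP
    simp only [mem_erase, mem_offDiag] at hp
    rcases eq_and_eq_or_eq_and_eq_of_X_sub_X_dvd hp.2.2.2.2 hpd with ⟨h1, h2⟩ | ⟨h1, h2⟩
    · exact hp.2.1 (Prod.ext h1 h2)
    · exact hp.1 (Prod.ext h1 h2)

lemma dvd_of_dvd_mul_prod_of_prime {M ι : Type*} [CommMonoidWithZero M] [IsCancelMulZero M]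
    {s : Finset ι} {f : ι → M} {a b : M} (hprime : ∀ i ∈ s, Prime (f i))
    (hndvd : ∀ i ∈ s, ¬ f i ∣ a) (h : a ∣ b * ∏ i ∈ s, f i) : a ∣ b := by
  classical
  induction s using Finset.induction_on with
  | empty => simpa using h
  | insert i s hi ih =>
    rw [Finset.forall_mem_insert] at hprime hndvd
    rw [Finset.prod_insert hi, mul_left_comm] at h
    exact ih hprime.2 hndvd.2
      ((hprime.1.left_dvd_or_dvd_right_of_dvd_mul h).resolve_left hndvd.1)

open Finset in
lemma dvd_of_dvd_mul_prod_of_isSymmetric [IsDomain R] [Fintype σ] {G H : MvPolynomial σ R}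
    (hG : G.IsSymmetric) {i j : σ} (hij : i ≠ j) (hndvd : ¬ MvPolynomial.X i - MvPolynomial.X j ∣ G)
    (h : G ∣ H * ∏ p ∈ (univ : Finset σ).offDiag, (MvPolynomial.X p.1 - MvPolynomial.X p.2)) :
    G ∣ H := by
  have hne : ∀ p ∈ (univ : Finset σ).offDiag, p.1 ≠ p.2 := fun p hp => (mem_offDiag.1 hp).2.2
  exact dvd_of_dvd_mul_prod_of_prime (fun p hp => prime_X_sub_X (hne p hp))
    (fun p hp hdvd => hndvd (X_sub_X_dvd_of_isSymmetric hG (hne p hp) hij hdvd)) h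

end Difference

section RootsHom

variable {k : Type*} [Field k] {n : ℕ}

variable (k n) in
/-- The polynomial `a ∏ᵢ (Z - xᵢ)` with independent variables `a, x_1, …, x_n`, over the ring
`k[a][x_1, …, x_n]`. -/
noncomputable def genericSplitPoly : (MvPolynomial (Fin n) k[X])[X] :=
  splitPoly (MvPolynomial.C X) MvPolynomial.X

variable (k n) in
/-- The homomorphism `k[p_0, …, p_n] → k[a][x_1, …, x_n]` that expresses the coefficients of a
polynomial through its leading coefficient `a` and its roots `xᵢ`. -/
noncomputable def rootsHom : MvPolynomial (Fin (n + 1)) k →ₐ[k] MvPolynomial (Fin n) k[X] :=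
  specialization k n (genericSplitPoly k n)

lemma C_X_ne_zero : (MvPolynomial.C X : MvPolynomial (Fin n) k[X]) ≠ 0 :=
  MvPolynomial.C_ne_zero.2 X_ne_zero

lemma natDegree_genericSplitPoly : (genericSplitPoly k n).natDegree = n := by
  rw [genericSplitPoly, natDegree_splitPoly C_X_ne_zero, Fintype.card_fin]

lemma coeff_genericSplitPoly_self : (genericSplitPoly k n).coeff n = MvPolynomial.C X := by
  have h : (genericSplitPoly k n).leadingCoeff = MvPolynomial.C X := leadingCoeff_splitPoly _ _
  rwa [leadingCoeff, natDegree_genericSplitPoly] at h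

lemma rootsHom_X_zero : rootsHom k n (MvPolynomial.X 0) = MvPolynomial.C X := by
  rw [rootsHom, specialization_X, Fin.val_zero, Nat.sub_zero, coeff_genericSplitPoly_self]

lemma isSymmetric_rootsHom (G : MvPolynomial (Fin (n + 1)) k) : (rootsHom k n G).IsSymmetric := by
  intro e
  let φ := (MvPolynomial.rename (R := k[X]) e).restrictScalars k
  have hmap : (genericSplitPoly k n).map φ.toRingHom = genericSplitPoly k n := by
    rw [genericSplitPoly, map_splitPoly]
    refine (congrArg₂ splitPoly ?_ ?_).trans (splitPoly_comp_perm _ _ e)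
    · exact MvPolynomial.rename_C e X
    · exact funext (MvPolynomial.rename_X e)
  have hcomp : φ.comp (rootsHom k n) = rootsHom k n := by
    rw [rootsHom, comp_specialization, hmap]
  exact DFunLike.congr_fun hcomp G

lemma exists_comp_rootsHom_eq_aeval {K : Type*} [Field K] [IsAlgClosed K] [Algebra k K]
    {c : Fin (n + 1) → K} (hc : c 0 ≠ 0) :
    ∃ ψ : MvPolynomial (Fin n) k[X] →ₐ[k] K, ψ.comp (rootsHom k n) = MvPolynomial.aeval c := by
  set F : K[X] := (genericPoly k n).map (MvPolynomial.aeval c : _ →ₐ[k] K).toRingHom with hF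
  have hcoeff : F.coeff n = c 0 := by
    simp [hF, coeff_map, coeff_genericPoly_self]
  have hdeg : F.natDegree = n :=
    natDegree_eq_of_le_of_coeff_ne_zero (natDegree_map_le.trans (natDegree_genericPoly_le k n))
      (hcoeff ▸ hc)
  obtain ⟨b, hb⟩ : ∃ b : Fin n → K, F = splitPoly (c 0) b := by
    have h := exists_eq_splitPoly (IsAlgClosed.splits F)
    rwa [leadingCoeff, hdeg, hcoeff] at h
  refine ⟨MvPolynomial.aevalTower (Polynomial.aeval (c 0)) b, ?_⟩
  rw [rootsHom, comp_specialization, ← specialization_map_genericPoly (MvPolynomial.aeval c), ← hF,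
    hb, genericSplitPoly, map_splitPoly]
  congr 2
  · simp
  · ext i
    simp

lemma rootsHom_injective : Function.Injective (rootsHom k n) := by
  rw [injective_iff_map_eq_zero]
  intro G hG
  by_contra hne
  let K := AlgebraicClosure k
  have hne' : MvPolynomial.map (algebraMap k K) (MvPolynomial.X 0 * G) ≠ 0 :=
    (map_ne_zero_iff _ (MvPolynomial.map_injective _ (algebraMap k K).injective)).2
      (mul_ne_zero (MvPolynomial.X_ne_zero 0) hne)
  obtain ⟨c, hc⟩ : ∃ c : Fin (n + 1) → K, MvPolynomial.aeval c (MvPolynomial.X 0 * G) ≠ 0 := by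
    by_contra! h
    exact hne' (MvPolynomial.funext fun c => by
      rw [MvPolynomial.eval_map, ← MvPolynomial.aeval_def, h, map_zero])
  rw [map_mul, MvPolynomial.aeval_X, mul_ne_zero_iff] at hc
  obtain ⟨ψ, hψ⟩ := exists_comp_rootsHom_eq_aeval (k := k) hc.1
  exact hc.2 (by rw [← hψ, AlgHom.comp_apply, hG, map_zero])

open Finset in
lemma associated_rootsHom_discr (hn : 0 < n) :
    Associated (rootsHom k n (genericPoly k n).discr) (MvPolynomial.C (X ^ (2 * (n - 1))) *
      ∏ p ∈ (univ : Finset (Fin n)).offDiag, (MvPolynomial.X p.1 - MvPolynomial.X p.2)) := by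
  have h := associated_specialization_discr (k := k) hn
    (natDegree_genericSplitPoly (k := k) (n := n)).le
  have hres := resultant_derivative_splitPoly C_X_ne_zero
    (MvPolynomial.X : Fin n → MvPolynomial (Fin n) k[X])
  rw [Fintype.card_fin, ← genericSplitPoly] at hres
  rw [coeff_genericSplitPoly_self, hres, show n - 1 + n = 1 + 2 * (n - 1) by omega, pow_add,
    pow_one, mul_assoc, ← map_pow] at h
  exact h.of_mul_left (Associated.refl _) C_X_ne_zero

lemma exists_associated_X_zero_pow_of_rootsHom_dvd {G : MvPolynomial (Fin (n + 1)) k} {N : ℕ}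
    (hG : rootsHom k n G ∣ MvPolynomial.C (X ^ N)) :
    ∃ d, Associated G (MvPolynomial.X 0 ^ d) := by
  have hprime : Prime (MvPolynomial.C X : MvPolynomial (Fin n) k[X]) :=
    (MvPolynomial.prime_C_iff _).2 prime_X
  rw [map_pow] at hG
  obtain ⟨d, -, u, hu⟩ := (dvd_prime_pow hprime N).1 hG
  obtain ⟨r, hr, hur⟩ := MvPolynomial.isUnit_iff_eq_C_of_isReduced.1 u.isUnit
  obtain ⟨c, hc, rfl⟩ := Polynomial.isUnit_iff.1 hr
  refine ⟨d, ((associated_mul_unit_right G _ (hc.map MvPolynomial.C)).trans (.of_eq ?_))⟩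
  refine rootsHom_injective ?_
  rw [map_mul, map_pow, rootsHom_X_zero, ← hu, hur]
  exact congrArg _ ((rootsHom k n).commutes c)

lemma resultant_derivative_genericPoly_ne_zero (hn : 0 < n) :
    resultant (genericPoly k n) (derivative (genericPoly k n)) n (n - 1) ≠ 0 := by
  rw [(associated_resultant_derivative_genericPoly hn).ne_zero_iff]
  refine mul_ne_zero (MvPolynomial.X_ne_zero 0) fun h => ?_
  have := (associated_rootsHom_discr (k := k) hn).ne_zero_iff.2 (mul_ne_zero
    (MvPolynomial.C_ne_zero.2 (pow_ne_zero _ X_ne_zero)) (Finset.prod_ne_zero_iff.2 fun p hp =>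
      (prime_X_sub_X (Finset.mem_offDiag.1 hp).2.2).ne_zero))
  exact this (by rw [h, map_zero])

end RootsHom

section Irreducible

variable {k : Type*} [Field k] {n : ℕ}

lemma not_X_mul_X_dvd_resultant_derivative {A : Type*} [CommRing A] [IsDomain A] {f : A[X]}
    {m : ℕ} (hf : f.natDegree ≤ m + 1) (hcoeff : f.coeff (m + 1) ≠ 0)
    (hres : resultant f (derivative f) (m + 1) m ≠ 0) :
    ¬ X * X ∣ resultant ((C X * X + C (-1)) * f.map C)
      (derivative ((C X * X + C (-1)) * f.map C)) (m + 2) (m + 1) := by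
  rw [resultant_derivative_linear_mul _ _ (natDegree_map_le.trans hf),
    mul_dvd_mul_iff_left X_ne_zero, X_dvd_iff, coeff_zero_eq_eval_zero, ← coe_evalRingHom]
  have hlinear : (C X * X + C (-1) : A[X][X]).map (evalRingHom 0) = C (-1) := by simp
  have heval : (f.map C).map (evalRingHom 0) = f := by
    rw [map_map, show (evalRingHom (0 : A)).comp C = RingHom.id A from RingHom.ext fun _ => eval_C,
      map_id]
  rw [map_mul, map_mul, ← resultant_map_map, ← resultant_map_map, ← resultant_map_map,
    ← derivative_map, hlinear, heval]
  simp [hcoeff, hres]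

lemma not_X_zero_dvd_discr_genericPoly (hn : 2 ≤ n) :
    ¬ MvPolynomial.X 0 ∣ (genericPoly k n).discr := by
  obtain ⟨m, rfl⟩ := Nat.exists_eq_add_of_le' hn
  set f := genericPoly k (m + 1)
  set F : (MvPolynomial (Fin (m + 2)) k)[X][X] := (C X * X + C (-1)) * f.map C with hF
  have hfC : (f.map C).natDegree ≤ m + 1 := natDegree_map_le.trans (natDegree_genericPoly_le k _)
  have hdeg : F.natDegree ≤ m + 2 :=
    (natDegree_mul_le_of_le natDegree_linear_le hfC).trans (by omega)
  have hcoeff : F.coeff (m + 2) = X * C (f.coeff (m + 1)) := by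
    rw [hF, add_mul, mul_assoc, coeff_add, coeff_C_mul, coeff_C_mul, coeff_X_mul,
      coeff_eq_zero_of_natDegree_lt (hfC.trans_lt (Nat.lt_succ_self _)), mul_zero, add_zero,
      coeff_map]
  have hf : f.coeff (m + 1) ≠ 0 := coeff_genericPoly_self (k := k) ▸ MvPolynomial.X_ne_zero 0
  intro h
  have hdvd : X ∣ specialization k (m + 2) F (genericPoly k (m + 2)).discr := by
    have := map_dvd (specialization k (m + 2) F) h
    rw [specialization_X, Fin.val_zero, Nat.sub_zero, hcoeff] at this
    exact (dvd_mul_right _ _).trans this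
  refine not_X_mul_X_dvd_resultant_derivative (natDegree_genericPoly_le k _) hf
    (resultant_derivative_genericPoly_ne_zero (by omega)) (Dvd.dvd.trans ?_
      (associated_specialization_discr (k := k) (n := m + 2) (by omega) hdeg).dvd)
  rw [hcoeff]
  exact mul_dvd_mul (dvd_mul_right _ _) hdvd

lemma isUnit_of_dvd_discr_genericPoly (hn : 2 ≤ n) {g : MvPolynomial (Fin (n + 1)) k}
    (hg : g ∣ (genericPoly k n).discr) {i j : Fin n} (hij : i ≠ j)
    (hndvd : ¬ MvPolynomial.X i - MvPolynomial.X j ∣ rootsHom k n g) : IsUnit g := by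
  have hdvd : rootsHom k n g ∣ MvPolynomial.C (X ^ (2 * (n - 1))) :=
    dvd_of_dvd_mul_prod_of_isSymmetric (isSymmetric_rootsHom g) hij hndvd
      ((map_dvd (rootsHom k n) hg).trans (associated_rootsHom_discr (by omega)).dvd)
  obtain ⟨d, hd⟩ := exists_associated_X_zero_pow_of_rootsHom_dvd hdvd
  rcases eq_or_ne d 0 with rfl | hd0
  · rwa [pow_zero, associated_one_iff_isUnit] at hd
  · have hX : MvPolynomial.X 0 ∣ g := (dvd_pow_self _ hd0).trans hd.symm.dvd
    exact absurd (hX.trans hg) (not_X_zero_dvd_discr_genericPoly hn)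

theorem irreducible_discr_genericPoly [NeZero (2 : k)] (hn : 2 ≤ n) :
    Irreducible (genericPoly k n).discr := by
  have : NeZero (2 : k[X]) := ⟨by rw [← map_ofNat C 2]; exact C_ne_zero.2 two_ne_zero⟩
  obtain ⟨i, j, hij⟩ : ∃ i j : Fin n, i ≠ j := ⟨⟨0, by omega⟩, ⟨1, by omega⟩, by simp⟩
  have hassoc := associated_rootsHom_discr (k := k) (n := n) (by omega)
  refine ⟨fun hunit => (prime_X_sub_X (R := k[X]) hij).not_isUnit ?_, fun g g' hgg' => ?_⟩
  · refine isUnit_of_dvd_unit ?_ (hassoc.isUnit (hunit.map (rootsHom k n)))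
    exact (Finset.dvd_prod_of_mem (fun p : Fin n × Fin n => MvPolynomial.X p.1 - MvPolynomial.X p.2)
      (show (i, j) ∈ _ by simpa using hij)).mul_left _
  · by_contra! h
    have hdvd : MvPolynomial.X i - MvPolynomial.X j ∣ rootsHom k n g :=
      not_not.1 fun hndvd => h.1 (isUnit_of_dvd_discr_genericPoly hn ⟨g', hgg'⟩ hij hndvd)
    have hdvd' : MvPolynomial.X i - MvPolynomial.X j ∣ rootsHom k n g' :=
      not_not.1 fun hndvd => h.2
        (isUnit_of_dvd_discr_genericPoly hn ⟨g, hgg'.trans (mul_comm _ _)⟩ hij hndvd)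
    refine not_X_sub_X_cube_dvd hij (pow_ne_zero (2 * (n - 1)) (X_ne_zero (R := k))) ?_
    refine Dvd.dvd.trans ?_ hassoc.dvd
    rw [hgg', map_mul, pow_succ]
    exact mul_dvd_mul (X_sub_X_sq_dvd_of_isSymmetric (isSymmetric_rootsHom g) hij hdvd) hdvd'

end Irreducible

end GenericPolynomial

theorem discriminant_irreducible_general (k : Type*) [Field k] [NeZero (2 : k)]
    (n : ℕ) (hn : 2 ≤ n) :
    (∃ Δ : MvPolynomial (Fin (n + 1)) k,
        res n (n - 1) (genericPoly k n) (derivative (genericPoly k n)) =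
          MvPolynomial.X 0 * Δ) ∧
      ∀ Δ : MvPolynomial (Fin (n + 1)) k,
        res n (n - 1) (genericPoly k n) (derivative (genericPoly k n)) =
            MvPolynomial.X 0 * Δ →
          Irreducible Δ := by
  have hres : Associated (res n (n - 1) (genericPoly k n) (derivative (genericPoly k n)))
      (MvPolynomial.X 0 * (genericPoly k n).discr) :=
    (GenericPolynomial.associated_res_resultant _ _ _ _).trans
      (GenericPolynomial.associated_resultant_derivative_genericPoly (by omega))
  refine ⟨(dvd_mul_right _ _).trans hres.symm.dvd, fun Δ hΔ => ?_⟩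
  rw [hΔ] at hres
  have hΔ' : Associated Δ (genericPoly k n).discr :=
    hres.of_mul_left (Associated.refl _) (MvPolynomial.X_ne_zero 0)
  exact hΔ'.irreducible_iff.2 (GenericPolynomial.irreducible_discr_genericPoly hn)

/-- Over an algebraically closed field `k` of characteristic zero and
`n ≥ 2`, the discriminant polynomial `Δ_n ∈ R = k[p_0, …, p_n]`, characterized by
`Res_{n,n−1}(f, f′) = p_0 · Δ_n` for the generic `f(Z) = p_0 Z^n + ⋯ + p_n`, exists and is
an irreducible element of `R`. -/
theorem discriminant_irreducible (k : Type*) [Field k] [IsAlgClosed k] [CharZero k]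
    (n : ℕ) (hn : 2 ≤ n) :
    (∃ Δ : MvPolynomial (Fin (n + 1)) k,
        res n (n - 1) (genericPoly k n) (derivative (genericPoly k n)) =
          MvPolynomial.X 0 * Δ) ∧
      ∀ Δ : MvPolynomial (Fin (n + 1)) k,
        res n (n - 1) (genericPoly k n) (derivative (genericPoly k n)) =
            MvPolynomial.X 0 * Δ →
          Irreducible Δ :=
  discriminant_irreducible_general k n hn
end
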